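/- For every ε > 0 there exist a number of agents n, finite response spaces X_j each containing an opt-out value ⊥, an ε-differentially private mechanism M : Π_j X_j → PMF(O), a post-processing function f : O → C with C finite, a real-valued utility function u : C → ℝ, an agent j, and an environment x₋ⱼ such that for every response a ∈ X_j with a ≠ ⊥, Σ_{c∈C} u(c)·P(f(M(a, x₋ⱼ)) = c) < Σ_{c∈C} u(c)·P(f(M(⊥, x₋ⱼ)) = c). In particular, there exist ε-differentially private mechanisms that violate the voluntary participation constraint. -/

import Mathlib

open scoped ENNReal

/-- Two inputs of a product space are neighboring if they differ in exactly one coordinate. -/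
def Neighboring {n : ℕ} {X : Fin n → Type*} (x x' : ∀ j, X j) : Prop :=
  ∃ j : Fin n, x j ≠ x' j ∧ ∀ i : Fin n, i ≠ j → x i = x' i

/-- `M` satisfies `(ε,δ)`-differential privacy. -/
def IsDP {n : ℕ} {X : Fin n → Type*} {O : Type*}
    (M : (∀ j, X j) → PMF O) (ε δ : ℝ) : Prop :=
  ∀ x x' : ∀ j, X j, Neighboring x x' → ∀ S : Set O,
    (M x).toOuterMeasure S ≤
      ENNReal.ofReal (Real.exp ε) * (M x').toOuterMeasure S + ENNReal.ofReal δ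

/-- Randomized response with the answer flipped: on report `b`, output `b` with probability
`1 / (1 + e^ε)` and `!b` with probability `e^ε / (1 + e^ε)`. -/
noncomputable def flippedRR (ε : ℝ) (b : Bool) : PMF Bool :=
  PMF.ofFintype
    (fun o => ENNReal.ofReal ((if o = b then 1 else Real.exp ε) / (1 + Real.exp ε))) (by
      have h := Real.exp_pos ε
      rw [Fintype.sum_bool, ← ENNReal.ofReal_add (by split_ifs <;> positivity)
        (by split_ifs <;> positivity), ENNReal.ofReal_eq_one]
      cases b <;> simp <;> field_simp
      ring)

theorem flippedRR_le (ε : ℝ) (hε : 0 < ε) (b b' o : Bool) :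
    flippedRR ε b o ≤ ENNReal.ofReal (Real.exp ε) * flippedRR ε b' o := by
  have h := Real.exp_pos ε
  have h1 : 1 < Real.exp ε := Real.one_lt_exp_iff.mpr hε
  simp only [flippedRR, PMF.ofFintype_apply]
  rw [← ENNReal.ofReal_mul h.le]
  apply ENNReal.ofReal_le_ofReal
  rw [← mul_div_assoc]
  apply div_le_div_of_nonneg_right _ (by positivity)
  split_ifs <;> nlinarith

/-- for every `ε > 0` there exist a number of agents `n`, finite response
spaces `X j` each with an opt-out value `bot j`, an `ε`-DP mechanism `M`, a post-processor
`f` into a finite consequence space, a utility function `u`, an agent `j`, and an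
environment (encoded by `x`, whose coordinates other than `j` form the environment) such
that every non-opt-out report `a` yields strictly smaller expected utility than opting
out: the voluntary participation constraint can fail under `ε`-differential privacy. -/
theorem stmt9 (ε : ℝ) (hε : 0 < ε) :
    ∃ (n : ℕ) (X : Fin n → Type) (_ : ∀ j, Fintype (X j)) (bot : ∀ j, X j)
      (O : Type) (M : (∀ j, X j) → PMF O)
      (C : Type) (instC : Fintype C) (f : O → C) (u : C → ℝ)
      (j : Fin n) (x : ∀ i, X i),
      IsDP M ε 0 ∧
      ∀ a : X j, a ≠ bot j →
        ∑ c ∈ @Finset.univ C instC, u c * (((M (Function.update x j a)).map f) c).toReal <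
        ∑ c ∈ @Finset.univ C instC,
          u c * (((M (Function.update x j (bot j))).map f) c).toReal := by
  have h := Real.exp_pos ε
  have h1 : 1 < Real.exp ε := Real.one_lt_exp_iff.mpr hε
  refine ⟨1, fun _ => Bool, fun _ => inferInstance, fun _ => false, Bool,
    fun x => flippedRR ε (x 0), Bool, inferInstance, id, fun c => if c then 1 else 0, 0,
    fun _ => false, ?_, ?_⟩
  · intro x x' _ S
    rw [PMF.toOuterMeasure_apply, PMF.toOuterMeasure_apply, ENNReal.ofReal_zero, add_zero,
      ← ENNReal.tsum_mul_left]
    apply ENNReal.tsum_le_tsum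
    intro o
    by_cases ho : o ∈ S
    · simpa [ho] using flippedRR_le ε hε (x 0) (x' 0) o
    · simp [ho]
  · intro a ha
    have ha' : a = true := by simpa using ha
    subst ha'
    simp only [PMF.map_id, Fintype.sum_bool, Function.update_self, flippedRR,
      PMF.ofFintype_apply]
    rw [ENNReal.toReal_ofReal (by split_ifs <;> positivity),
      ENNReal.toReal_ofReal (by split_ifs <;> positivity),
      ENNReal.toReal_ofReal (by split_ifs <;> positivity)]
    simp
    rw [inv_eq_one_div]
    exact div_lt_div_of_pos_right h1 (by positivity)
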